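/- arXiv:1703.02444 — 4 statements merged into one kernel-verified Lean document; each statement's English description precedes it below -/
import Mathlib

section
/- Let G = (V,E) be a finite simple graph with n vertices and m edges, and set d = n+m. Then the d-dimensional Lebesgue volume of Q(G) equals the volume of O(G) divided by 2^m, and hence vol(Q(G)) = e(G)/(2^m * d!), where e(G) is the number of linear extensions of the incidence poset of G. -/
open MeasureTheory Filter

noncomputable section

/-- The standard relaxation `Q(G)` of the boolean quadric polytope of a graph `G`:
the set of points of `[0,1]^(V + E)` satisfying, for each edge `(i,j)`,
`0 ≤ y_{ij}`, `y_{ij} ≤ x_i`, `y_{ij} ≤ x_j` and `x_i + x_j ≤ 1 + y_{ij}`. -/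
def QSet {V : Type*} (G : SimpleGraph V) : Set ((V → ℝ) × (↥G.edgeSet → ℝ)) :=
  {p | (∀ i, p.1 i ∈ Set.Icc (0 : ℝ) 1) ∧ (∀ e, p.2 e ∈ Set.Icc (0 : ℝ) 1) ∧
    ∀ (i j : V) (h : G.Adj i j),
      0 ≤ p.2 ⟨s(i, j), (SimpleGraph.mem_edgeSet _).mpr h⟩ ∧
      p.2 ⟨s(i, j), (SimpleGraph.mem_edgeSet _).mpr h⟩ ≤ p.1 i ∧
      p.2 ⟨s(i, j), (SimpleGraph.mem_edgeSet _).mpr h⟩ ≤ p.1 j ∧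
      p.1 i + p.1 j ≤ 1 + p.2 ⟨s(i, j), (SimpleGraph.mem_edgeSet _).mpr h⟩}

/-- The order polytope `O(G)` of a graph `G`: the set of points of `[0,1]^(V + E)`
satisfying `y_{ij} ≤ x_i` and `y_{ij} ≤ x_j` for each edge `(i,j)`. -/
def OSet {V : Type*} (G : SimpleGraph V) : Set ((V → ℝ) × (↥G.edgeSet → ℝ)) :=
  {p | (∀ i, p.1 i ∈ Set.Icc (0 : ℝ) 1) ∧ (∀ e, p.2 e ∈ Set.Icc (0 : ℝ) 1) ∧
    ∀ (e : G.edgeSet) (i : V), i ∈ (e : Sym2 V) → p.2 e ≤ p.1 i}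

/-- The number of linear extensions of the incidence poset of `G`: the number of
bijections from `V ⊕ E` to the chain `{1, …, |V| + |E|}` sending `y_{ij}` below
`x_i` and `x_j` for every edge `(i,j)`. -/
def incLinExt {V : Type*} [Fintype V] (G : SimpleGraph V) [Fintype G.edgeSet] : ℕ :=
  Nat.card {f : (V ⊕ G.edgeSet) ≃ Fin (Fintype.card V + Fintype.card G.edgeSet) //
    ∀ (e : G.edgeSet) (i : V), i ∈ (e : Sym2 V) → f (Sum.inr e) < f (Sum.inl i)}

/-!
Over a point `x` of the cube `[0,1]^V`, the fibre of `O(G)` is a box with sides `min x_i x_j`, and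
that of `Q(G)` a box with sides `min x_i x_j - max 0 (x_i + x_j - 1) = min (tent x_i) (tent x_j)`,
where `tent t = min t (1 - t)`. When `t` is uniform on `[0,1]`, both `tent t` and `t / 2` are
uniform on `[0,1/2]`; replacing `tent` by halving therefore does not change the integral over the
cube, and every edge then contributes a factor `1/2`.

The volume of `O(G)` is Stanley's: almost every point of the cube has distinct coordinates, so up to
a null set the cube is cut into `d!` congruent simplices, one for each ordering of the coordinates,
and an order polytope is the union of those whose ordering is a linear extension.
-/

open Set
open scoped ENNReal

section OrderPolytope

variable {ι : Type*} {d : ℕ}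

/-- The order polytope of a relation `r` on `ι`: the order-preserving maps from `ι` to `[0,1]`.
No order axioms are imposed on `r`, so that the relations generating a poset suffice. -/
def orderPolytope (r : ι → ι → Prop) : Set (ι → ℝ) :=
  {z | z ∈ Icc 0 1 ∧ ∀ a b, r a b → z a ≤ z b}

/-- The linear extensions of a relation `r` on `ι`, as enumerations of `ι` by the chain `Fin d`.
The inequality is not strict, so that pairs `r a a` impose no condition. -/
def linearExtensions (r : ι → ι → Prop) (d : ℕ) : Set (ι ≃ Fin d) :=
  {f | ∀ a b, r a b → f a ≤ f b}

/-- The simplex of the points of the cube `[0,1]^ι` whose coordinates are strictly increasing in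
the ordering `f` of `ι`. -/
def orderSimplex (f : ι ≃ Fin d) : Set (ι → ℝ) :=
  {z | z ∈ Icc 0 1 ∧ StrictMono (z ∘ f.symm)}

lemma le_iff_le_of_mem_orderSimplex {f : ι ≃ Fin d} {z : ι → ℝ} (hz : z ∈ orderSimplex f)
    (a b : ι) : z a ≤ z b ↔ f a ≤ f b := by
  simpa using hz.2.le_iff_le (a := f a) (b := f b)

lemma mem_orderPolytope_iff_of_mem_orderSimplex {r : ι → ι → Prop} {f : ι ≃ Fin d} {z : ι → ℝ}
    (hz : z ∈ orderSimplex f) : z ∈ orderPolytope r ↔ f ∈ linearExtensions r d := by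
  simp only [orderPolytope, linearExtensions, mem_ofPred_eq, le_iff_le_of_mem_orderSimplex hz,
    and_iff_right hz.1]

lemma pairwise_disjoint_orderSimplex :
    Pairwise (Function.onFun Disjoint (orderSimplex : (ι ≃ Fin d) → Set (ι → ℝ))) := by
  refine fun f g hfg ↦ disjoint_left.2 fun z hf hg ↦ hfg ?_
  let φ : Fin d ≃o Fin d :=
    { f.symm.trans g with
      map_rel_iff' := fun {a b} ↦ by
        simpa using (le_iff_le_of_mem_orderSimplex hg (f.symm a) (f.symm b)).symm.trans
          (le_iff_le_of_mem_orderSimplex hf _ _) }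
  have hφ : φ = OrderIso.refl _ := Subsingleton.elim _ _
  ext1 a
  simpa [φ] using (DFunLike.congr_fun hφ (f a)).symm

lemma measurableSet_orderSimplex (f : ι ≃ Fin d) : MeasurableSet (orderSimplex f) := by
  have : Countable ι := f.injective.countable
  simp only [orderSimplex, StrictMono, ofPred_and, ofPred_forall]
  refine measurableSet_Icc.inter <| .iInter fun i ↦ .iInter fun j ↦ .iInter fun _ ↦ ?_
  exact measurableSet_lt (by fun_prop) (by fun_prop)

lemma exists_mem_orderSimplex [Fintype ι] (hd : Fintype.card ι = d) {z : ι → ℝ}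
    (hz : z ∈ Icc 0 1) (hinj : Function.Injective z) : ∃ f : ι ≃ Fin d, z ∈ orderSimplex f := by
  let g := Fintype.equivFinOfCardEq hd
  let σ := Tuple.sort (z ∘ g.symm)
  refine ⟨(σ.trans g.symm).symm, hz, ?_⟩
  exact (Tuple.monotone_sort (z ∘ g.symm)).strictMono_of_injective
    (hinj.comp (g.symm.injective.comp σ.injective))

lemma ae_injective [Finite ι] (μ : Measure (ι → ℝ)) [μ.IsAddHaarMeasure] :
    ∀ᵐ z ∂μ, Function.Injective z := by
  classical
  have := Fintype.ofFinite ι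
  have hne (i j : ι) (hij : i ≠ j) : ∀ᵐ z ∂μ, z i ≠ z j := by
    let diagonal : Submodule ℝ (ι → ℝ) :=
      LinearMap.eqLocus (LinearMap.proj (R := ℝ) (φ := fun _ ↦ ℝ) i) (LinearMap.proj j)
    have hproper : diagonal ≠ ⊤ := fun h ↦ by
      have : Pi.single i (1 : ℝ) ∈ diagonal := h ▸ Submodule.mem_top
      simp [diagonal, hij.symm] at this
    have hnull : μ {z | z i = z j} = 0 := Measure.addHaar_submodule μ diagonal hproper
    simpa [ae_iff] using hnull
  simp only [Function.Injective, ae_all_iff]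
  intro i j
  rcases eq_or_ne i j with rfl | hij
  · simp
  · filter_upwards [hne i j hij] with z hz h using absurd h hz

variable [Fintype ι]

lemma volume_orderSimplex_eq_volume_refl (f : ι ≃ Fin d) :
    volume (orderSimplex f) = volume (orderSimplex (Equiv.refl (Fin d))) := by
  have hpre : orderSimplex f =
      MeasurableEquiv.piCongrLeft (fun _ ↦ ℝ) f ⁻¹' orderSimplex (Equiv.refl (Fin d)) := by
    ext z
    have hcomp : MeasurableEquiv.piCongrLeft (fun _ ↦ ℝ) f z = z ∘ f.symm := by
      ext i
      obtain ⟨a, rfl⟩ := f.surjective i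
      simp [MeasurableEquiv.piCongrLeft_apply_apply]
    simp [orderSimplex, hcomp, Pi.le_def, f.symm.forall_congr_left]
  rw [hpre]
  exact (volume_measurePreserving_piCongrLeft (fun _ ↦ ℝ) f).measure_preimage_equiv _

lemma orderPolytope_ae_eq_iUnion_orderSimplex (r : ι → ι → Prop) (hd : Fintype.card ι = d) :
    orderPolytope r =ᵐ[volume] ⋃ f : linearExtensions r d, orderSimplex (f : ι ≃ Fin d) := by
  refine Filter.eventuallyEq_set.2 ?_
  filter_upwards [ae_injective (volume : Measure (ι → ℝ))] with z hz
  rw [mem_iUnion]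
  constructor
  · intro hr
    obtain ⟨f, hf⟩ := exists_mem_orderSimplex hd hr.1 hz
    exact ⟨⟨f, (mem_orderPolytope_iff_of_mem_orderSimplex hf).1 hr⟩, hf⟩
  · rintro ⟨f, hf⟩
    exact (mem_orderPolytope_iff_of_mem_orderSimplex hf).2 f.2

lemma volume_orderPolytope_eq_card_mul (r : ι → ι → Prop) (hd : Fintype.card ι = d) :
    volume (orderPolytope r) =
      Nat.card (linearExtensions r d) * volume (orderSimplex (Equiv.refl (Fin d))) := by
  rw [measure_congr (orderPolytope_ae_eq_iUnion_orderSimplex r hd), measure_iUnion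
    (pairwise_disjoint_orderSimplex.comp_of_injective Subtype.val_injective)
    (fun f ↦ measurableSet_orderSimplex f.1)]
  simp only [volume_orderSimplex_eq_volume_refl, ENNReal.tsum_const, ENat.card_eq_coe_natCard,
    ENat.toENNReal_coe]

lemma volume_orderSimplex_refl (d : ℕ) :
    volume (orderSimplex (Equiv.refl (Fin d))) = (d.factorial : ℝ≥0∞)⁻¹ := by
  have hcube : orderPolytope (fun _ _ : Fin d ↦ False) = Icc 0 1 := by
    simp [orderPolytope, ofPred_mem_eq, -mem_Icc]
  have hcard : Nat.card (linearExtensions (fun _ _ : Fin d ↦ False) d) = d.factorial := by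
    simp [linearExtensions, Nat.card_eq_fintype_card, Fintype.card_perm]
  have h := volume_orderPolytope_eq_card_mul (fun _ _ : Fin d ↦ False) (Fintype.card_fin d)
  rw [hcube, hcard, Real.volume_Icc_pi] at h
  exact ENNReal.eq_inv_of_mul_eq_one_left (by simpa [mul_comm] using h.symm)

theorem volume_orderPolytope (r : ι → ι → Prop) (hd : Fintype.card ι = d) :
    volume (orderPolytope r) = Nat.card (linearExtensions r d) / d.factorial := by
  rw [volume_orderPolytope_eq_card_mul r hd, volume_orderSimplex_refl, div_eq_mul_inv]

end OrderPolytope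

section Tent

/-- The tent map, which folds `[0,1]` onto `[0,1/2]`. -/
def tent (t : ℝ) : ℝ := min t (1 - t)

@[fun_prop]
lemma measurable_tent : Measurable tent := by
  unfold tent
  fun_prop

lemma map_tent_volume_restrict_Icc :
    (volume.restrict (Icc (0 : ℝ) 1)).map tent =
      (volume.restrict (Icc (0 : ℝ) 1)).map (· / 2) := by
  refine Measure.ext_of_Ici _ _ fun a ↦ ?_
  have htent : tent ⁻¹' Ici a ∩ Icc 0 1 = Icc (max a 0) (min (1 - a) 1) := by
    ext t
    simp only [tent, mem_inter_iff, mem_preimage, mem_Ici, mem_Icc]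
    grind
  have hhalf : (· / 2) ⁻¹' Ici a ∩ Icc (0 : ℝ) 1 = Icc (max (2 * a) 0) 1 := by
    ext t
    simp only [mem_inter_iff, mem_preimage, mem_Ici, mem_Icc]
    grind
  rw [Measure.map_apply measurable_tent measurableSet_Ici,
    Measure.map_apply (by fun_prop) measurableSet_Ici,
    Measure.restrict_apply (measurable_tent measurableSet_Ici),
    Measure.restrict_apply (measurableSet_Ici.preimage (by fun_prop)), htent, hhalf,
    Real.volume_Icc, Real.volume_Icc]
  congr 1
  grind

variable {ι : Type*} [Fintype ι]

lemma volume_restrict_Icc_eq_pi (a b : ι → ℝ) :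
    volume.restrict (Icc a b) = Measure.pi fun i ↦ volume.restrict (Icc (a i) (b i)) := by
  rw [← pi_univ_Icc, volume_pi, Measure.restrict_pi_pi]

lemma map_tent_comp_volume_restrict_Icc :
    (volume.restrict (Icc (0 : ι → ℝ) 1)).map (fun x i ↦ tent (x i)) =
      (volume.restrict (Icc (0 : ι → ℝ) 1)).map (fun x i ↦ x i / 2) := by
  simp only [volume_restrict_Icc_eq_pi, Pi.zero_apply, Pi.one_apply]
  rw [Measure.pi_map_pi fun _ ↦ measurable_tent.aemeasurable, map_tent_volume_restrict_Icc,
    Measure.pi_map_pi (f := fun _ (t : ℝ) ↦ t / 2) fun _ ↦ by fun_prop]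

lemma lintegral_Icc_comp_tent {F : (ι → ℝ) → ℝ≥0∞} (hF : Measurable F) :
    ∫⁻ x in Icc (0 : ι → ℝ) 1, F (fun i ↦ tent (x i)) =
      ∫⁻ x in Icc (0 : ι → ℝ) 1, F (fun i ↦ x i / 2) := by
  rw [← lintegral_map hF (by fun_prop), map_tent_comp_volume_restrict_Icc,
    lintegral_map hF (by fun_prop)]

end Tent

section Sym2

variable {ι α : Type*}

lemma le_sym2_inf_map [SemilatticeInf α] {x : ι → α} {e : Sym2 ι} {c : α} :
    c ≤ (e.map x).inf ↔ ∀ i ∈ e, c ≤ x i := by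
  induction e with | _ i j
  simp

lemma sym2_inf_map_div {c : ℝ} (hc : 0 ≤ c) (x : ι → ℝ) (e : Sym2 ι) :
    (e.map fun i ↦ x i / c).inf = (e.map x).inf / c := by
  induction e with | _ i j
  simp [min_div_div_right hc]

lemma sym2_inf_map_sub_max (x : ι → ℝ) (e : Sym2 ι) :
    (e.map x).inf - max 0 ((e.map x).inf + (e.map x).sup - 1) =
      (e.map fun i ↦ tent (x i)).inf := by
  induction e with | _ i j
  simp only [Sym2.map_mk, Sym2.inf_mk, Sym2.sup_mk, tent]
  grind

@[fun_prop]
lemma measurable_sym2_inf_map [SemilatticeInf α] [MeasurableSpace α] [MeasurableInf₂ α]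
    (e : Sym2 ι) : Measurable fun x : ι → α ↦ (e.map x).inf := by
  induction e with | _ i j
  simp only [Sym2.map_mk, Sym2.inf_mk]
  fun_prop

@[fun_prop]
lemma measurable_sym2_sup_map [SemilatticeSup α] [MeasurableSpace α] [MeasurableSup₂ α]
    (e : Sym2 ι) : Measurable fun x : ι → α ↦ (e.map x).sup := by
  induction e with | _ i j
  simp only [Sym2.map_mk, Sym2.sup_mk]
  fun_prop

end Sym2

lemma prod_volume_Icc_fibers {X κ : Type*} [MeasurableSpace X] [Fintype κ] (μ : Measure X)
    {s : Set X} (hs : MeasurableSet s) {a b : X → κ → ℝ} (ha : Measurable a) (hb : Measurable b) :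
    (μ.prod volume) {p : X × (κ → ℝ) | p.1 ∈ s ∧ p.2 ∈ Icc (a p.1) (b p.1)} =
      ∫⁻ x in s, ∏ k, ENNReal.ofReal (b x k - a x k) ∂μ := by
  have hmeas : MeasurableSet {p : X × (κ → ℝ) | p.1 ∈ s ∧ p.2 ∈ Icc (a p.1) (b p.1)} :=
    (measurable_fst hs).inter <| (measurableSet_le (ha.comp measurable_fst) measurable_snd).inter
      (measurableSet_le measurable_snd (hb.comp measurable_fst))
  rw [Measure.prod_apply hmeas, ← lintegral_indicator hs]
  refine lintegral_congr fun x ↦ ?_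
  by_cases hx : x ∈ s
  · simp only [preimage_ofPred_eq, hx, true_and, ofPred_mem_eq, indicator_of_mem,
      Real.volume_Icc_pi]
  · simp [hx]

section Graph

variable {V : Type*} (G : SimpleGraph V)

/-- The strict order of the incidence poset of `G` on vertices and edges: an edge lies below each of
its endpoints. -/
inductive IncidenceLT : V ⊕ G.edgeSet → V ⊕ G.edgeSet → Prop
  | intro (e : G.edgeSet) (i : V) (h : i ∈ (e : Sym2 V)) : IncidenceLT (Sum.inr e) (Sum.inl i)

lemma forall_incidenceLT {P : V ⊕ G.edgeSet → V ⊕ G.edgeSet → Prop} :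
    (∀ a b, IncidenceLT G a b → P a b) ↔
      ∀ (e : G.edgeSet) (i : V), i ∈ (e : Sym2 V) → P (Sum.inr e) (Sum.inl i) := by
  constructor
  · exact fun h e i hi ↦ h _ _ (.intro e i hi)
  · rintro h _ _ ⟨e, i, hi⟩
    exact h e i hi

lemma sumPiEquivProdPi_preimage_OSet :
    MeasurableEquiv.sumPiEquivProdPi (fun _ : V ⊕ G.edgeSet ↦ ℝ) ⁻¹' OSet G =
      orderPolytope (IncidenceLT G) := by
  ext z
  simp only [orderPolytope, OSet, mem_preimage, mem_ofPred_eq, forall_incidenceLT]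
  simp only [mem_Icc, Pi.le_def, Sum.forall, MeasurableEquiv.coe_sumPiEquivProdPi,
    Equiv.sumPiEquivProdPi_apply, Pi.zero_apply, Pi.one_apply, forall_and]
  tauto

lemma OSet_eq_Icc_fibers :
    OSet G = {p | p.1 ∈ Icc 0 1 ∧ p.2 ∈ Icc 0 fun e : G.edgeSet ↦ ((e : Sym2 V).map p.1).inf} := by
  ext ⟨x, y⟩
  simp only [OSet, mem_ofPred_eq, mem_Icc, Pi.le_def, le_sym2_inf_map]
  constructor
  · rintro ⟨hx, hy, hxy⟩
    exact ⟨⟨fun i ↦ (hx i).1, fun i ↦ (hx i).2⟩, fun e ↦ (hy e).1, hxy⟩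
  · rintro ⟨⟨hx₀, hx₁⟩, hy, hxy⟩
    refine ⟨fun i ↦ ⟨hx₀ i, hx₁ i⟩, fun e ↦ ⟨hy e, ?_⟩, hxy⟩
    exact (hxy e _ (Sym2.out_fst_mem _)).trans (hx₁ _)

lemma QSet_eq_Icc_fibers :
    QSet G = {p | p.1 ∈ Icc 0 1 ∧ p.2 ∈ Icc
      (fun e : G.edgeSet ↦ max 0 (((e : Sym2 V).map p.1).inf + ((e : Sym2 V).map p.1).sup - 1))
      (fun e : G.edgeSet ↦ ((e : Sym2 V).map p.1).inf)} := by
  ext ⟨x, y⟩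
  simp only [QSet, mem_ofPred_eq, mem_Icc, Pi.le_def, Subtype.forall, Sym2.forall, Sym2.map_mk,
    Sym2.inf_mk, Sym2.sup_mk, min_add_max, SimpleGraph.mem_edgeSet, max_le_iff, le_min_iff,
    Pi.zero_apply, Pi.one_apply]
  grind

variable [Fintype V] [Fintype G.edgeSet]

lemma volume_OSet_eq_lintegral :
    volume (OSet G) =
      ∫⁻ x in Icc (0 : V → ℝ) 1, ∏ e : G.edgeSet, ENNReal.ofReal ((e : Sym2 V).map x).inf := by
  have hinf : Measurable fun (x : V → ℝ) (e : G.edgeSet) ↦ ((e : Sym2 V).map x).inf := by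
    fun_prop
  rw [OSet_eq_Icc_fibers, Measure.volume_eq_prod,
    prod_volume_Icc_fibers _ measurableSet_Icc measurable_const hinf]
  simp only [Pi.zero_apply, sub_zero]

lemma volume_QSet_eq_lintegral :
    volume (QSet G) = ∫⁻ x in Icc (0 : V → ℝ) 1,
      ∏ e : G.edgeSet, ENNReal.ofReal ((e : Sym2 V).map fun i ↦ tent (x i)).inf := by
  have hinf : Measurable fun (x : V → ℝ) (e : G.edgeSet) ↦ ((e : Sym2 V).map x).inf := by
    fun_prop
  have hlower : Measurable fun (x : V → ℝ) (e : G.edgeSet) ↦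
      max 0 (((e : Sym2 V).map x).inf + ((e : Sym2 V).map x).sup - 1) := by
    fun_prop
  rw [QSet_eq_Icc_fibers, Measure.volume_eq_prod,
    prod_volume_Icc_fibers _ measurableSet_Icc hlower hinf]
  simp only [sym2_inf_map_sub_max]

theorem volume_QSet_eq_volume_OSet_div :
    volume (QSet G) = volume (OSet G) / 2 ^ Fintype.card G.edgeSet := by
  let F (x : V → ℝ) : ℝ≥0∞ := ∏ e : G.edgeSet, ENNReal.ofReal ((e : Sym2 V).map x).inf
  have hF : Measurable F := by fun_prop
  have hhalf (x : V → ℝ) : F (fun i ↦ x i / 2) = F x * (2 ^ Fintype.card G.edgeSet)⁻¹ := by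
    simp_rw [F, sym2_inf_map_div zero_le_two, ENNReal.ofReal_div_of_pos two_pos,
      ENNReal.ofReal_ofNat, div_eq_mul_inv, Finset.prod_mul_distrib, Finset.prod_const,
      Finset.card_univ, ENNReal.inv_pow]
  calc volume (QSet G)
      = ∫⁻ x in Icc (0 : V → ℝ) 1, F (fun i ↦ tent (x i)) := volume_QSet_eq_lintegral G
    _ = ∫⁻ x in Icc (0 : V → ℝ) 1, F (fun i ↦ x i / 2) := lintegral_Icc_comp_tent hF
    _ = (∫⁻ x in Icc (0 : V → ℝ) 1, F x) * (2 ^ Fintype.card G.edgeSet)⁻¹ := by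
      simp only [hhalf, lintegral_mul_const _ hF]
    _ = volume (OSet G) / 2 ^ Fintype.card G.edgeSet := by
      rw [volume_OSet_eq_lintegral, div_eq_mul_inv]

lemma card_linearExtensions_incidenceLT :
    Nat.card (linearExtensions (IncidenceLT G) (Fintype.card V + Fintype.card G.edgeSet)) =
      incLinExt G := by
  refine Nat.card_congr (Equiv.subtypeEquivRight fun f ↦ ?_)
  simp only [linearExtensions, mem_ofPred_eq, forall_incidenceLT]
  have hne (e : G.edgeSet) (i : V) : f (Sum.inr e) ≠ f (Sum.inl i) := f.injective.ne Sum.inr_ne_inl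
  simp only [(hne _ _).le_iff_lt]

theorem volume_OSet :
    volume (OSet G) = incLinExt G / (Fintype.card V + Fintype.card G.edgeSet).factorial := by
  rw [← (volume_measurePreserving_sumPiEquivProdPi
      fun _ : V ⊕ G.edgeSet ↦ ℝ).measure_preimage_equiv, sumPiEquivProdPi_preimage_OSet,
    volume_orderPolytope _ Fintype.card_sum, card_linearExtensions_incidenceLT]

end Graph

/-- `vol Q(G) = vol O(G) / 2^m = e(G) / (2^m * d!)`. -/
theorem volume_QSet_eq {V : Type} [Fintype V] [DecidableEq V]
    (G : SimpleGraph V) [DecidableRel G.Adj] :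
    volume (QSet G) = volume (OSet G) / 2 ^ (Fintype.card G.edgeSet) ∧
    volume (QSet G) = (incLinExt G : ENNReal) /
      ((2 : ENNReal) ^ (Fintype.card G.edgeSet) *
        (Nat.factorial (Fintype.card V + Fintype.card G.edgeSet) : ENNReal)) := by
  refine ⟨volume_QSet_eq_volume_OSet_div G, ?_⟩
  rw [volume_QSet_eq_volume_OSet_div, volume_OSet, div_eq_mul_inv, div_eq_mul_inv, div_eq_mul_inv,
    ENNReal.mul_inv (by simp) (by simp), mul_assoc, mul_comm (_⁻¹ : ℝ≥0∞)]
end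
end

section
/- For every m >= 1, the (2m+1)-dimensional Lebesgue volume of Q(S_m) equals (m!)^2 / (2m+1)!. -/
open MeasureTheory Filter

noncomputable section

/-- The star `S_m` with `m` edges: vertex `0` is the center, adjacent to the `m` leaves. -/
def starGraph (m : ℕ) : SimpleGraph (Fin (m + 1)) :=
  SimpleGraph.fromRel (fun i _ => i = 0)

instance (m : ℕ) : DecidableRel (starGraph m).Adj := fun i j =>
  decidable_of_iff _ (SimpleGraph.fromRel_adj _ i j).symm

/-!
Each leaf of the star, together with its edge, is coupled only to the center coordinate `t`. The
polytope is therefore fibered over `t ∈ [0, 1]`, each fiber being the `m`-th power of the slice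
`{(x, y) | 0 ≤ y ≤ t, 0 ≤ x - y ≤ 1 - t}`. The shear `(x, y) ↦ (x - y, y)` turns this slice into a
rectangle of area `t (1 - t)`, so the volume is the Beta integral `∫₀¹ tᵐ (1 - t)ᵐ dt`.
-/

section FiberPower

variable {α β : Type*}

/-- The fiber power over `s ⊆ α` of a set `A ⊆ α × β`, viewed as a family of subsets of `β`
indexed by `α`: its points are a base point of `s` with one point of the fiber of `A` over it for
each `i : ι`. The base `s` is recorded separately so that an empty power is `s`. -/
def fiberPower (ι : Type*) (s : Set α) (A : Set (α × β)) : Set (α × (ι → β)) :=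
  {q | q.1 ∈ s ∧ ∀ i, (q.1, q.2 i) ∈ A}

variable {ι : Type*} {s : Set α} {A : Set (α × β)}

lemma mk_preimage_fiberPower_of_mem {a : α} (ha : a ∈ s) :
    Prod.mk a ⁻¹' fiberPower ι s A = Set.univ.pi fun _ => Prod.mk a ⁻¹' A := by
  ext f
  simp [fiberPower, ha]

lemma mk_preimage_fiberPower_of_notMem {a : α} (ha : a ∉ s) :
    Prod.mk a ⁻¹' fiberPower ι s A = ∅ := by
  ext f
  simp [fiberPower, ha]

variable [MeasurableSpace α] [MeasurableSpace β]

lemma measurableSet_fiberPower [Countable ι] (hs : MeasurableSet s) (hA : MeasurableSet A) :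
    MeasurableSet (fiberPower ι s A) :=
  (hs.preimage measurable_fst).inter <| measurableSet_setOfPred.2 <| Measurable.forall fun i =>
    measurableSet_setOfPred.1 <| hA.preimage
      (measurable_fst.prodMk ((measurable_pi_apply i).comp measurable_snd))

lemma prod_pi_fiberPower [Fintype ι] (μ : Measure α) (ν : Measure β) [SigmaFinite ν]
    (hs : MeasurableSet s) (hA : MeasurableSet A) :
    μ.prod (Measure.pi fun _ : ι => ν) (fiberPower ι s A) =
      ∫⁻ a in s, ν (Prod.mk a ⁻¹' A) ^ Fintype.card ι ∂μ := by
  rw [Measure.prod_apply (measurableSet_fiberPower hs hA), ← lintegral_indicator hs]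
  refine lintegral_congr fun a => ?_
  by_cases ha : a ∈ s
  · simp [mk_preimage_fiberPower_of_mem ha, Set.indicator_of_mem ha, Measure.pi_pi]
  · simp [mk_preimage_fiberPower_of_notMem ha, Set.indicator_of_notMem ha]

end FiberPower

section CenterLeafCoords

variable {m : ℕ} {E α : Type*}

/-- Regroups vertex and edge coordinates of a star into the center coordinate and, for each leaf,
the pair of its own coordinate and that of its edge. Vertex `0` is the center, and `e` sends `k` to
the edge at the leaf `k.succ`. -/
def centerLeafCoords (e : Fin m ≃ E) (p : (Fin (m + 1) → α) × (E → α)) :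
    α × (Fin m → α × α) :=
  (p.1 0, fun k => (p.1 k.succ, p.2 (e k)))

lemma measurePreserving_centerLeafCoords [Fintype E] [MeasureSpace α]
    [SigmaFinite (volume : Measure α)] (e : Fin m ≃ E) :
    MeasurePreserving (centerLeafCoords (α := α) e) :=
  have split_center := (volume_preserving_piFinSuccAbove (fun _ : Fin (m + 1) => α) 0).prod
    (volume_measurePreserving_piCongrLeft (fun _ : E => α) e).symm
  have pair_leaves := (MeasurePreserving.id (volume : Measure α)).prod
    (volume_measurePreserving_arrowProdEquivProdArrow α α (Fin m)).symm
  pair_leaves.comp (volume_preserving_prodAssoc.comp split_center)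

end CenterLeafCoords

lemma integral_pow_mul_one_sub_pow (a b : ℕ) :
    ∫ x in (0 : ℝ)..1, x ^ a * (1 - x) ^ b =
      (a.factorial * b.factorial / (a + b + 1).factorial : ℝ) := by
  have re_pos (n : ℕ) : 0 < (n + 1 : ℂ).re := by
    rw [Complex.add_re, Complex.natCast_re, Complex.one_re]
    positivity
  have gamma_quotient : Complex.betaIntegral (a + 1) (b + 1) =
      (a.factorial * b.factorial / (a + b + 1).factorial : ℂ) := by
    rw [Complex.betaIntegral_eq_Gamma_mul_div _ _ (re_pos a) (re_pos b),
      show (a + 1 + (b + 1) : ℂ) = (a + b + 1 : ℕ) + 1 by push_cast; ring]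
    simp only [Complex.Gamma_nat_eq_factorial]
  have beta_eq_ofReal : Complex.betaIntegral (a + 1) (b + 1) =
      ((∫ x in (0 : ℝ)..1, x ^ a * (1 - x) ^ b : ℝ) : ℂ) := by
    simp [Complex.betaIntegral, ← intervalIntegral.integral_ofReal]
  apply Complex.ofReal_injective
  push_cast
  exact beta_eq_ofReal.symm.trans gamma_quotient

lemma lintegral_Icc_pow_mul_one_sub_pow (a b : ℕ) :
    ∫⁻ x in Set.Icc (0 : ℝ) 1, ENNReal.ofReal x ^ a * ENNReal.ofReal (1 - x) ^ b =
      (a.factorial * b.factorial / (a + b + 1).factorial : ENNReal) := by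
  have nonneg : ∀ x ∈ Set.Icc (0 : ℝ) 1, 0 ≤ x ^ a * (1 - x) ^ b := fun x hx =>
    mul_nonneg (pow_nonneg hx.1 a) (pow_nonneg (sub_nonneg.2 hx.2) b)
  have integrable : IntegrableOn (fun x : ℝ => x ^ a * (1 - x) ^ b) (Set.Icc 0 1) :=
    Continuous.integrableOn_Icc (by fun_prop)
  calc ∫⁻ x in Set.Icc (0 : ℝ) 1, ENNReal.ofReal x ^ a * ENNReal.ofReal (1 - x) ^ b
      = ∫⁻ x in Set.Icc (0 : ℝ) 1, ENNReal.ofReal (x ^ a * (1 - x) ^ b) :=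
        setLIntegral_congr_fun measurableSet_Icc fun x hx => by
          rw [ENNReal.ofReal_mul (pow_nonneg hx.1 a), ENNReal.ofReal_pow hx.1,
            ENNReal.ofReal_pow (sub_nonneg.2 hx.2)]
    _ = ENNReal.ofReal (∫ x in (0 : ℝ)..1, x ^ a * (1 - x) ^ b) := by
        rw [intervalIntegral.integral_of_le zero_le_one, ← integral_Icc_eq_integral_Ioc,
          ofReal_integral_eq_lintegral_ofReal integrable
            (ae_restrict_of_forall_mem measurableSet_Icc nonneg)]
    _ = a.factorial * b.factorial / (a + b + 1).factorial := by
        rw [integral_pow_mul_one_sub_pow, ENNReal.ofReal_div_of_pos (by positivity),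
          ENNReal.ofReal_mul (by positivity)]
        simp only [ENNReal.ofReal_natCast]

/-- The McCormick tetrahedron, the relaxation of `y = u * v` over `0 ≤ u, v ≤ 1`: the constraints
that a single edge imposes on its triple of coordinates `(x_i, x_j, y_{ij})`. -/
def mcCormick : Set (ℝ × ℝ × ℝ) :=
  {p | 0 ≤ p.2.2 ∧ p.2.2 ≤ p.1 ∧ p.2.2 ≤ p.2.1 ∧ p.1 + p.2.1 ≤ 1 + p.2.2}

lemma mem_mcCormick_comm {u v y : ℝ} : (u, v, y) ∈ mcCormick ↔ (v, u, y) ∈ mcCormick := by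
  simp only [mcCormick, Set.mem_ofPred_eq, add_comm u v]
  tauto

lemma mcCormick_subset_Icc_prod :
    mcCormick ⊆ Set.Icc (0 : ℝ) 1 ×ˢ Set.Icc (0 : ℝ) 1 ×ˢ Set.Icc (0 : ℝ) 1 := by
  rintro ⟨u, v, y⟩ ⟨y_nonneg, y_le_u, y_le_v, add_le⟩
  refine ⟨⟨?_, ?_⟩, ⟨?_, ?_⟩, ?_, ?_⟩ <;> linarith

lemma isClosed_mcCormick : IsClosed mcCormick :=
  (isClosed_le (by fun_prop) (by fun_prop)).and <|
    (isClosed_le (by fun_prop) (by fun_prop)).and <|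
    (isClosed_le (by fun_prop) (by fun_prop)).and <|
    isClosed_le (by fun_prop) (by fun_prop)

lemma mk_preimage_mcCormick (u : ℝ) :
    Prod.mk u ⁻¹' mcCormick =
      (fun z : ℝ × ℝ => (z.1 - z.2, z.2)) ⁻¹' (Set.Icc 0 (1 - u) ×ˢ Set.Icc 0 u) := by
  ext ⟨v, y⟩
  simp only [mcCormick, Set.mem_preimage, Set.mem_ofPred_eq, Set.mem_prod, Set.mem_Icc]
  constructor
  · rintro ⟨_, _, _, _⟩
    refine ⟨⟨?_, ?_⟩, ?_, ?_⟩ <;> linarith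
  · rintro ⟨⟨_, _⟩, _, _⟩
    refine ⟨?_, ?_, ?_, ?_⟩ <;> linarith

lemma volume_mk_preimage_mcCormick (u : ℝ) :
    volume (Prod.mk u ⁻¹' mcCormick) = ENNReal.ofReal u * ENNReal.ofReal (1 - u) := by
  rw [mk_preimage_mcCormick, Measure.volume_eq_prod,
    (measurePreserving_sub_prod volume volume).measure_preimage
      (measurableSet_Icc.prod measurableSet_Icc).nullMeasurableSet,
    Measure.prod_prod, Real.volume_Icc, Real.volume_Icc, sub_zero, sub_zero, mul_comm]

lemma volume_fiberPower_mcCormick (ι : Type*) [Fintype ι] :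
    volume (fiberPower ι (Set.Icc 0 1) mcCormick) =
      ((Fintype.card ι).factorial ^ 2 / (2 * Fintype.card ι + 1).factorial : ENNReal) := by
  rw [Measure.volume_eq_prod, volume_pi,
    prod_pi_fiberPower volume volume measurableSet_Icc isClosed_mcCormick.measurableSet]
  simp only [volume_mk_preimage_mcCormick, mul_pow]
  rw [lintegral_Icc_pow_mul_one_sub_pow, ← sq, ← two_mul]

section Star

variable {m : ℕ}

lemma starGraph_adj_iff {i j : Fin (m + 1)} :
    (starGraph m).Adj i j ↔ ∃ k : Fin m, s(i, j) = s(0, k.succ) := by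
  simp only [starGraph, SimpleGraph.fromRel_adj, Sym2.eq_iff]
  constructor
  · rintro ⟨ne, rfl | rfl⟩
    · obtain ⟨k, rfl⟩ := Fin.exists_succ_eq.2 ne.symm
      exact ⟨k, .inl ⟨rfl, rfl⟩⟩
    · obtain ⟨k, rfl⟩ := Fin.exists_succ_eq.2 ne
      exact ⟨k, .inr ⟨rfl, rfl⟩⟩
  · rintro ⟨k, ⟨rfl, rfl⟩ | ⟨rfl, rfl⟩⟩
    · exact ⟨k.succ_ne_zero.symm, .inl rfl⟩
    · exact ⟨k.succ_ne_zero, .inr rfl⟩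

lemma starGraph_adj_zero_succ (k : Fin m) : (starGraph m).Adj 0 k.succ :=
  starGraph_adj_iff.2 ⟨k, rfl⟩

/-- The edge of the star joining its center to the leaf `k.succ`. -/
def starEdge (k : Fin m) : (starGraph m).edgeSet :=
  ⟨s(0, k.succ), starGraph_adj_zero_succ k⟩

lemma starEdge_bijective : Function.Bijective (starEdge (m := m)) := by
  constructor
  · intro k l h
    exact Fin.succ_injective m (Sym2.congr_right.1 (congrArg Subtype.val h))
  · rintro ⟨⟨i, j⟩, h⟩
    obtain ⟨k, hk⟩ := starGraph_adj_iff.1 h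
    exact ⟨k, Subtype.ext hk.symm⟩

/-- The edges of the star, indexed by its leaves. -/
def starEdgeEquiv (m : ℕ) : Fin m ≃ (starGraph m).edgeSet :=
  Equiv.ofBijective starEdge starEdge_bijective

lemma mem_QSet_starGraph_iff {p : (Fin (m + 1) → ℝ) × ((starGraph m).edgeSet → ℝ)} :
    p ∈ QSet (starGraph m) ↔
      p.1 0 ∈ Set.Icc (0 : ℝ) 1 ∧ ∀ k, (p.1 0, p.1 k.succ, p.2 (starEdge k)) ∈ mcCormick := by
  constructor
  · rintro ⟨vertex_mem, -, edge_mem⟩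
    exact ⟨vertex_mem 0, fun k => edge_mem 0 k.succ (starGraph_adj_zero_succ k)⟩
  · rintro ⟨center_mem, leaf_mem⟩
    refine ⟨Fin.cases center_mem fun k => (mcCormick_subset_Icc_prod (leaf_mem k)).2.1,
      starEdge_bijective.surjective.forall.2 fun k =>
        (mcCormick_subset_Icc_prod (leaf_mem k)).2.2,
      fun i j h => ?_⟩
    obtain ⟨k, hk⟩ := starGraph_adj_iff.1 h
    have edge_eq : (⟨s(i, j), h⟩ : (starGraph m).edgeSet) = starEdge k := Subtype.ext hk
    rw [edge_eq]
    rcases Sym2.eq_iff.1 hk with ⟨rfl, rfl⟩ | ⟨rfl, rfl⟩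
    · exact leaf_mem k
    · exact mem_mcCormick_comm.1 (leaf_mem k)

lemma QSet_starGraph (m : ℕ) :
    QSet (starGraph m) =
      centerLeafCoords (starEdgeEquiv m) ⁻¹' fiberPower (Fin m) (Set.Icc 0 1) mcCormick :=
  Set.ext fun _ => mem_QSet_starGraph_iff

end Star

/-- `vol Q(S_m) = (m!)^2 / (2m+1)!`. -/
theorem volume_QSet_star (m : ℕ) (hm : 1 ≤ m) :
    volume (QSet (starGraph m)) =
      (Nat.factorial m : ENNReal) ^ 2 / (Nat.factorial (2 * m + 1) : ENNReal) := by
  have measurable_fiberPower : MeasurableSet (fiberPower (Fin m) (Set.Icc 0 1) mcCormick) :=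
    measurableSet_fiberPower measurableSet_Icc isClosed_mcCormick.measurableSet
  calc volume (QSet (starGraph m))
      = volume (centerLeafCoords (starEdgeEquiv m) ⁻¹'
          fiberPower (Fin m) (Set.Icc 0 1) mcCormick) := by
        rw [QSet_starGraph]
    _ = volume (fiberPower (Fin m) (Set.Icc 0 1) mcCormick) :=
        (measurePreserving_centerLeafCoords (starEdgeEquiv m)).measure_preimage
          measurable_fiberPower.nullMeasurableSet
    _ = (Nat.factorial m : ENNReal) ^ 2 / (Nat.factorial (2 * m + 1) : ENNReal) := by
        rw [volume_fiberPower_mcCormick, Fintype.card_fin]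
end
end

section
/- For every m >= 0, the (2m+1)-dimensional Lebesgue volume of Q(P_m) equals A_{2m+1} / (2^m * (2m+1)!), where A_{2m+1} is the Euler number counting alternating permutations of {1, ..., 2m+1}. -/
open MeasureTheory Filter

noncomputable section

/-- The Euler number `A k`: the number of alternating permutations `σ` of
`{1, …, k}`, i.e. with `σ 1 > σ 2 < σ 3 > σ 4 < ⋯` (here written 0-indexed). -/
def eulerNumber (k : ℕ) : ℕ :=
  Nat.card {σ : Equiv.Perm (Fin k) //
    ∀ (i : ℕ) (h : i + 1 < k),
      (Even i → σ ⟨i + 1, h⟩ < σ ⟨i, Nat.lt_of_succ_lt h⟩) ∧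
      (Odd i → σ ⟨i, Nat.lt_of_succ_lt h⟩ < σ ⟨i + 1, h⟩)}

/-- The path `P_m` with `m + 1` vertices and `m` edges. -/
def pathG (m : ℕ) : SimpleGraph (Fin (m + 1)) :=
  SimpleGraph.fromRel (fun i j => (i : ℕ) + 1 = (j : ℕ))

instance (m : ℕ) : DecidableRel (pathG m).Adj := fun i j =>
  decidable_of_iff _ (SimpleGraph.fromRel_adj _ i j).symm

/-!
Over a point `x` of the cube, the fibre of `Q(G)` is a box with one side for each edge `{i, j}`, of
length `min x_i x_j - max 0 (x_i + x_j - 1) = min (T x_i) (T x_j) / 2`, where `T` is the tent map.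
Since `T` preserves the uniform distribution on `[0, 1]`, it can be dropped from the integral over
`x`, and what remains is `2 ^ (-|E|)` times the volume of the order polytope of the vertices and
edges of `G`, each edge lying below its endpoints. That polytope has volume (number of linear
extensions) / `(|V| + |E|)!` (Stanley): a point with distinct coordinates satisfies the order
constraints after exactly as many permutations of its coordinates as there are linear extensions,
and all permutations preserve the volume. For a path the order is a zigzag, and its linear
extensions are the alternating permutations.
-/

open scoped ENNReal

section NaturalLabeling

variable {ι κ α : Type*}

/-- The cone of families `u : ι → α` that are monotone for the relation `r`. For `α = ℝ`, its
intersection with the unit cube is Stanley's order polytope of `r`. -/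
def orderCone (r : ι → ι → Prop) (α : Type*) [LE α] : Set (ι → α) :=
  {u | ∀ i j, r i j → u i ≤ u j}

/-- The natural labelings of a relation `r` by `{0, …, n - 1}`, that is, its linear extensions when
`r` is a partial order. The number of labels is a parameter, to avoid casts between `Fin` types;
there are no natural labelings unless `n` is the cardinality of `ι`. -/
def NaturalLabeling (r : ι → ι → Prop) (n : ℕ) : Type _ :=
  {σ : ι ≃ Fin n // ⇑σ ∈ orderCone r (Fin n)}

lemma card_naturalLabeling_congr {r : ι → ι → Prop} {s : κ → κ → Prop} (f : r ≃r s) (n : ℕ) :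
    Nat.card (NaturalLabeling r n) = Nat.card (NaturalLabeling s n) :=
  Nat.card_congr <| (f.toEquiv.equivCongr (Equiv.refl (Fin n))).subtypeEquiv fun σ => by
    have hsymm (i : ι) : f.toEquiv.symm (f i) = i := f.toEquiv.symm_apply_apply i
    simp [orderCone, f.surjective.forall, f.map_rel_iff, hsymm]

lemma exists_equiv_fin_le_iff_le [Fintype ι] [LinearOrder α] {n : ℕ} (hn : Fintype.card ι = n)
    {u : ι → α} (hu : Function.Injective u) :
    ∃ e : ι ≃ Fin n, ∀ i j, e i ≤ e j ↔ u i ≤ u j := by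
  let _ : LinearOrder ι := LinearOrder.lift' u hu
  exact ⟨(Fintype.orderIsoFinOfCardEq ι hn).symm.toEquiv,
    fun i j => (Fintype.orderIsoFinOfCardEq ι hn).symm.le_iff_le⟩

lemma card_perm_comp_mem_orderCone [Fintype ι] [LinearOrder α] (r : ι → ι → Prop) {n : ℕ}
    (hn : Fintype.card ι = n) {u : ι → α} (hu : Function.Injective u) :
    Nat.card {τ : Equiv.Perm ι // u ∘ τ ∈ orderCone r α} = Nat.card (NaturalLabeling r n) := by
  obtain ⟨e, he⟩ := exists_equiv_fin_le_iff_le hn hu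
  exact Nat.card_congr <| ((Equiv.refl ι).equivCongr e).subtypeEquiv fun τ => by
    simp [orderCone, he]

end NaturalLabeling

section ProductMeasure

variable {ι α : Type*} [Fintype ι] [MeasurableSpace α] (ν : Measure α)

lemma measurePreserving_comp_perm [SigmaFinite ν] (τ : Equiv.Perm ι) :
    MeasurePreserving (fun u : ι → α => u ∘ τ) (Measure.pi fun _ => ν) (Measure.pi fun _ => ν) :=
  measurePreserving_arrowCongr' (fun _ => ν) (fun _ => ν) τ.symm (MeasurableEquiv.refl α)
    fun _ => MeasurePreserving.id ν

lemma ae_pi_injective [MeasurableEq α] [IsProbabilityMeasure ν] [NullSingletonClass ν] :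
    ∀ᵐ u ∂Measure.pi (fun _ : ι => ν), Function.Injective u := by
  have hdiag : (ν.prod ν) (Set.diagonal α) = 0 := by
    rw [Measure.measure_prod_null measurableSet_diagonal]
    filter_upwards with x
    simp [Set.diagonal]
  have hne (i j : ι) (hij : i ≠ j) : ∀ᵐ u ∂Measure.pi (fun _ : ι => ν), u i ≠ u j := by
    have hmap : (Measure.pi fun _ : ι => ν).map (fun u => (u i, u j)) = ν.prod ν := by
      have hindep := (ProbabilityTheory.iIndepFun_pi (μ := fun _ : ι => ν) (X := fun _ x => x)
        fun _ => aemeasurable_id).indepFun hij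
      rw [hindep.map_prod_eq_prod_map_map (measurable_pi_apply i).aemeasurable
        (measurable_pi_apply j).aemeasurable]
      simp only [(measurePreserving_eval (fun _ : ι => ν) _).map_eq]
    rw [← hmap, Measure.map_apply (by fun_prop) measurableSet_diagonal] at hdiag
    exact measure_eq_zero_iff_ae_notMem.1 hdiag
  have hall : ∀ᵐ u ∂Measure.pi (fun _ : ι => ν), ∀ i j, i ≠ j → u i ≠ u j :=
    ae_all_iff.2 fun i => ae_all_iff.2 fun j => ae_all_iff.2 (hne i j)
  filter_upwards [hall] with u hu i j
  exact not_imp_not.1 (hu i j)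

lemma measure_prod_pi_setOf_forall_mem {X : Type*} [MeasurableSpace X] (μ : Measure X)
    [SigmaFinite ν] {A : Set X} (hA : MeasurableSet A) (t : X → ι → Set α)
    (hs : MeasurableSet {p : X × (ι → α) | p.1 ∈ A ∧ ∀ i, p.2 i ∈ t p.1 i}) :
    μ.prod (Measure.pi fun _ => ν) {p : X × (ι → α) | p.1 ∈ A ∧ ∀ i, p.2 i ∈ t p.1 i} =
      ∫⁻ x in A, ∏ i, ν (t x i) ∂μ := by
  rw [Measure.prod_apply hs, ← lintegral_indicator hA]
  refine lintegral_congr fun x => ?_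
  by_cases hx : x ∈ A
  · have hslice : Prod.mk x ⁻¹' {p : X × (ι → α) | p.1 ∈ A ∧ ∀ i, p.2 i ∈ t p.1 i} =
        Set.univ.pi (t x) := by
      ext y
      simp [hx]
    rw [hslice, Measure.pi_pi, Set.indicator_of_mem hx]
  · simp [hx]

end ProductMeasure

section OrderCone

variable {ι α : Type*} [LinearOrder α] [TopologicalSpace α] [OrderClosedTopology α]
  [SecondCountableTopology α] [MeasurableSpace α] [OpensMeasurableSpace α]

lemma measurableSet_orderCone [Countable ι] (r : ι → ι → Prop) : MeasurableSet (orderCone r α) := by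
  simp only [orderCone, Set.ofPred_forall]
  exact .iInter fun i => .iInter fun j => .iInter fun _ =>
    measurableSet_le (measurable_pi_apply i) (measurable_pi_apply j)

variable [Fintype ι]

lemma factorial_mul_measure_pi_orderCone (ν : Measure α) [IsProbabilityMeasure ν]
    [NullSingletonClass ν] (r : ι → ι → Prop) {n : ℕ} (hn : Fintype.card ι = n) :
    (n.factorial : ℝ≥0∞) * Measure.pi (fun _ : ι => ν) (orderCone r α) =
      Nat.card (NaturalLabeling r n) := by
  classical
  let π := Measure.pi fun _ : ι => ν
  let C (τ : Equiv.Perm ι) : Set (ι → α) := {u | u ∘ τ ∈ orderCone r α}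
  have hC (τ : Equiv.Perm ι) : MeasurableSet (C τ) :=
    (measurePreserving_comp_perm ν τ).measurable (measurableSet_orderCone r)
  have hπC (τ : Equiv.Perm ι) : π (C τ) = π (orderCone r α) :=
    (measurePreserving_comp_perm ν τ).measure_preimage
      (measurableSet_orderCone r).nullMeasurableSet
  have hcount : ∀ᵐ u ∂π, ∑ τ, (C τ).indicator (1 : (ι → α) → ℝ≥0∞) u =
      Nat.card (NaturalLabeling r n) := by
    filter_upwards [ae_pi_injective ν] with u hu
    rw [← card_perm_comp_mem_orderCone r hn hu, Nat.card_eq_fintype_card, Fintype.card_subtype]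
    simp [C, Set.indicator_apply]
  calc (n.factorial : ℝ≥0∞) * π (orderCone r α)
      = ∑ τ, π (C τ) := by simp [hπC, Fintype.card_perm, hn]
    _ = ∫⁻ u, ∑ τ, (C τ).indicator 1 u ∂π := by
      rw [lintegral_finsetSum _ fun τ _ => measurable_one.indicator (hC τ)]
      simp only [lintegral_indicator_one (hC _)]
    _ = Nat.card (NaturalLabeling r n) := by
      rw [lintegral_congr_ae hcount, lintegral_const, measure_univ, mul_one]

theorem measure_pi_orderCone (ν : Measure α) [IsProbabilityMeasure ν]
    [NullSingletonClass ν] (r : ι → ι → Prop) {n : ℕ} (hn : Fintype.card ι = n) :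
    Measure.pi (fun _ : ι => ν) (orderCone r α) = Nat.card (NaturalLabeling r n) / n.factorial := by
  rw [ENNReal.eq_div_iff (by positivity) (by simp), factorial_mul_measure_pi_orderCone ν r hn]

end OrderCone

section Tent

/-- The uniform distribution on the unit interval, as a measure on `ℝ`. -/
abbrev uniformUnit : Measure ℝ := volume.restrict (Set.Icc 0 1)

instance : IsProbabilityMeasure uniformUnit := ⟨by simp⟩

lemma uniformUnit_Iic (a : ℝ) : uniformUnit (Set.Iic a) = ENNReal.ofReal (min a 1) := by
  have hinter : Set.Iic a ∩ Set.Icc 0 1 = Set.Icc 0 (min a 1) := by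
    ext x
    simp only [Set.mem_inter_iff, Set.mem_Iic, Set.mem_Icc]
    grind
  rw [Measure.restrict_apply measurableSet_Iic, hinter, Real.volume_Icc, sub_zero]

lemma uniformUnit_Ici (a : ℝ) : uniformUnit (Set.Ici a) = ENNReal.ofReal (1 - max a 0) := by
  have hinter : Set.Ici a ∩ Set.Icc 0 1 = Set.Icc (max a 0) 1 := by
    ext x
    simp only [Set.mem_inter_iff, Set.mem_Ici, Set.mem_Icc]
    grind
  rw [Measure.restrict_apply measurableSet_Ici, hinter, Real.volume_Icc]

/-- The tent map, folding the unit interval onto itself two-to-one. -/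
def tentMap (x : ℝ) : ℝ := 2 * min x (1 - x)

@[fun_prop]
lemma measurable_tentMap : Measurable tentMap := by unfold tentMap; fun_prop

lemma tentMap_le_one (x : ℝ) : tentMap x ≤ 1 := by
  unfold tentMap; grind

lemma tentMap_preimage_Iic (a : ℝ) :
    tentMap ⁻¹' Set.Iic a = Set.Iic (a / 2) ∪ Set.Ici (1 - a / 2) := by
  ext x
  simp only [tentMap, Set.mem_preimage, Set.mem_Iic, Set.mem_union, Set.mem_Ici]
  grind

lemma uniformUnit_tentMap_preimage_Iic (a : ℝ) :
    uniformUnit (tentMap ⁻¹' Set.Iic a) = uniformUnit (Set.Iic a) := by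
  rw [uniformUnit_Iic]
  rcases lt_or_ge a 1 with ha | ha
  · have hdisj : Disjoint (Set.Iic (a / 2)) (Set.Ici (1 - a / 2)) :=
      Set.Iic_disjoint_Ici.2 (by linarith)
    rw [tentMap_preimage_Iic, measure_union hdisj measurableSet_Ici, uniformUnit_Iic,
      uniformUnit_Ici, min_eq_left (by linarith), min_eq_left ha.le, max_eq_left (by linarith),
      sub_sub_cancel]
    rcases le_total 0 a with h0 | h0
    · rw [← ENNReal.ofReal_add (by linarith) (by linarith), add_halves]
    · rw [ENNReal.ofReal_of_nonpos h0, ENNReal.ofReal_of_nonpos (by linarith), add_zero]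
  · have huniv : tentMap ⁻¹' Set.Iic a = Set.univ :=
      Set.eq_univ_of_forall fun x => (tentMap_le_one x).trans ha
    rw [huniv, measure_univ, min_eq_right ha, ENNReal.ofReal_one]

lemma measurePreserving_tentMap : MeasurePreserving tentMap uniformUnit uniformUnit where
  measurable := measurable_tentMap
  map_eq := by
    have := Measure.isFiniteMeasure_map uniformUnit tentMap
    refine Measure.ext_of_Iic _ _ fun a => ?_
    rw [Measure.map_apply measurable_tentMap measurableSet_Iic, uniformUnit_tentMap_preimage_Iic]

lemma min_sub_max_add_sub_one (a b : ℝ) :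
    min a b - max 0 (a + b - 1) = min (tentMap a) (tentMap b) / 2 := by
  unfold tentMap; grind

end Tent

section Sym2

variable {V α : Type*} [LinearOrder α]

lemma le_inf_map_iff_forall_mem {x : V → α} {e : Sym2 V} {a : α} :
    a ≤ (e.map x).inf ↔ ∀ v ∈ e, a ≤ x v := by
  induction e with | _ i j => simp

lemma measurable_inf_map [TopologicalSpace α] [OrderClosedTopology α] [SecondCountableTopology α]
    [MeasurableSpace α] [OpensMeasurableSpace α] (e : Sym2 V) :
    Measurable fun x : V → α => (e.map x).inf := by
  induction e with | _ i j => exact (measurable_pi_apply i).min (measurable_pi_apply j)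

end Sym2

section Graph

variable {V : Type*} (G : SimpleGraph V)

/-- The interval of values allowed for the coordinate of the edge `e` in the fibre of `Q(G)` over
`x`. For `e = {i, j}` the sum `x i + x j` appears as the sum of the minimum and the maximum. -/
def edgeInterval (x : V → ℝ) (e : Sym2 V) : Set ℝ :=
  Set.Icc (max 0 ((e.map x).inf + (e.map x).sup - 1)) (e.map x).inf

lemma edgeInterval_mk (x : V → ℝ) (i j : V) :
    edgeInterval x s(i, j) = Set.Icc (max 0 (x i + x j - 1)) (min (x i) (x j)) := by
  simp [edgeInterval, min_add_max]

lemma mem_edgeInterval_mk {x : V → ℝ} {i j : V} {t : ℝ} :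
    t ∈ edgeInterval x s(i, j) ↔ 0 ≤ t ∧ t ≤ x i ∧ t ≤ x j ∧ x i + x j ≤ 1 + t := by
  rw [edgeInterval_mk, Set.mem_Icc]; grind

lemma volume_edgeInterval (x : V → ℝ) (e : Sym2 V) :
    volume (edgeInterval x e) = uniformUnit (Set.Iic (e.map (tentMap ∘ x)).inf) / 2 := by
  induction e with | _ i j =>
  have hle : min (tentMap (x i)) (tentMap (x j)) ≤ 1 := min_le_of_left_le (tentMap_le_one _)
  rw [edgeInterval_mk, Real.volume_Icc, min_sub_max_add_sub_one,
    ENNReal.ofReal_div_of_pos two_pos, ENNReal.ofReal_ofNat, uniformUnit_Iic, Sym2.map_mk,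
    Sym2.inf_mk, Function.comp_apply, Function.comp_apply, min_eq_left hle]

lemma QSet_eq_setOf_mem_edgeInterval : QSet G = {p |
    p.1 ∈ Set.univ.pi (fun _ => Set.Icc 0 1) ∧ ∀ e : G.edgeSet, p.2 e ∈ edgeInterval p.1 e} := by
  ext ⟨x, y⟩
  constructor
  · rintro ⟨hx, -, hxy⟩
    refine ⟨fun i _ => hx i, fun ⟨e, he⟩ => ?_⟩
    induction e with | _ i j => exact mem_edgeInterval_mk.2 (hxy i j he)
  · rintro ⟨hx, hxy⟩
    refine ⟨fun i => hx i trivial, fun ⟨e, he⟩ => ?_,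
      fun i j hij => mem_edgeInterval_mk.1 (hxy ⟨s(i, j), hij⟩)⟩
    induction e with | _ i j =>
    obtain ⟨hy, hyi, -⟩ := mem_edgeInterval_mk.1 (hxy ⟨s(i, j), he⟩)
    exact ⟨hy, hyi.trans (hx i trivial).2⟩

lemma isClosed_QSet : IsClosed (QSet G) := by
  simp only [QSet, Set.mem_Icc, Set.ofPred_forall, Set.ofPred_and]
  refine .inter (isClosed_iInter fun _ => .inter ?_ ?_)
    (.inter (isClosed_iInter fun _ => .inter ?_ ?_)
      (isClosed_iInter fun _ => isClosed_iInter fun _ => isClosed_iInter fun _ =>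
        .inter ?_ (.inter ?_ (.inter ?_ ?_)))) <;>
  exact isClosed_le (by fun_prop) (by fun_prop)

/-- The relation on the vertices and edges of a graph under which an edge is below each of its
endpoints. -/
def incidenceRel : V ⊕ G.edgeSet → V ⊕ G.edgeSet → Prop
  | .inr e, .inl v => v ∈ e.1
  | _, _ => False

variable [Fintype V] [Fintype G.edgeSet]

lemma measure_pi_orderCone_incidenceRel {α : Type*} [LinearOrder α] [TopologicalSpace α]
    [OrderClosedTopology α] [SecondCountableTopology α] [MeasurableSpace α]
    [OpensMeasurableSpace α] (ν : Measure α) [SigmaFinite ν] :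
    Measure.pi (fun _ => ν) (orderCone (incidenceRel G) α) =
      ∫⁻ x, ∏ e : G.edgeSet, ν (Set.Iic (e.1.map x).inf) ∂Measure.pi fun _ : V => ν := by
  have hcone : MeasurableSet (orderCone (incidenceRel G) α) := measurableSet_orderCone _
  have hsplit := measurePreserving_sumPiEquivProdPi_symm fun _ : V ⊕ G.edgeSet => ν
  have hpre : (MeasurableEquiv.sumPiEquivProdPi fun _ : V ⊕ G.edgeSet => α).symm ⁻¹'
      orderCone (incidenceRel G) α =
        {p | p.1 ∈ Set.univ ∧ ∀ e : G.edgeSet, p.2 e ∈ Set.Iic (e.1.map p.1).inf} := by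
    ext ⟨x, y⟩
    simp [orderCone, incidenceRel, le_inf_map_iff_forall_mem, MeasurableEquiv.sumPiEquivProdPi]
  rw [← hsplit.measure_preimage hcone.nullMeasurableSet, hpre,
    measure_prod_pi_setOf_forall_mem ν _ .univ
      (fun (x : V → α) (e : G.edgeSet) => Set.Iic (e.1.map x).inf)
      (hpre ▸ hsplit.measurable hcone), Measure.restrict_univ]

lemma volume_QSet_eq_lintegral_s6 :
    volume (QSet G) = ∫⁻ x, ∏ e : G.edgeSet, volume (edgeInterval x e)
      ∂Measure.pi fun _ : V => uniformUnit := by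
  have hQ := (isClosed_QSet G).measurableSet
  rw [QSet_eq_setOf_mem_edgeInterval] at hQ ⊢
  rw [Measure.volume_eq_prod, volume_pi (α := fun _ : G.edgeSet => ℝ),
    measure_prod_pi_setOf_forall_mem _ _ (.univ_pi fun _ => measurableSet_Icc)
      (fun (x : V → ℝ) (e : G.edgeSet) => edgeInterval x e) hQ, volume_pi,
    Measure.restrict_pi_pi]

lemma volume_QSet_eq_measure_orderCone :
    volume (QSet G) = Measure.pi (fun _ => uniformUnit) (orderCone (incidenceRel G) ℝ) /
      2 ^ Fintype.card G.edgeSet := by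
  have hfold := measurePreserving_pi (fun _ : V => uniformUnit) (fun _ => uniformUnit)
    fun _ => measurePreserving_tentMap
  have hmeas : Measurable fun x : V → ℝ =>
      ∏ e : G.edgeSet, uniformUnit (Set.Iic (e.1.map x).inf) := by
    have hmono : Monotone fun a => uniformUnit (Set.Iic a) := fun a b hab =>
      measure_mono (Set.Iic_subset_Iic.2 hab)
    exact Finset.measurable_prod _ fun e _ => hmono.measurable.comp (measurable_inf_map e.1)
  calc volume (QSet G)
      = ∫⁻ x, (∏ e : G.edgeSet, uniformUnit (Set.Iic (e.1.map (tentMap ∘ x)).inf)) /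
          2 ^ Fintype.card G.edgeSet ∂Measure.pi fun _ : V => uniformUnit := by
        simp only [volume_QSet_eq_lintegral_s6, volume_edgeInterval, div_eq_mul_inv,
          Finset.prod_mul_distrib, Finset.prod_const, Finset.card_univ, ENNReal.inv_pow]
    _ = (∫⁻ x, ∏ e : G.edgeSet, uniformUnit (Set.Iic (e.1.map x).inf)
          ∂Measure.pi fun _ : V => uniformUnit) / 2 ^ Fintype.card G.edgeSet := by
        simp only [div_eq_mul_inv]
        rw [lintegral_mul_const' _ _ (by simp)]
        congr 1
        exact hfold.lintegral_comp hmeas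
    _ = _ := by rw [measure_pi_orderCone_incidenceRel]

theorem volume_QSet {n : ℕ} (hn : Fintype.card V + Fintype.card G.edgeSet = n) :
    volume (QSet G) = Nat.card (NaturalLabeling (incidenceRel G) n) /
      (2 ^ Fintype.card G.edgeSet * n.factorial) := by
  rw [volume_QSet_eq_measure_orderCone, measure_pi_orderCone _ _ (Fintype.card_sum.trans hn),
    mul_comm (2 ^ _), div_eq_mul_inv, div_eq_mul_inv, div_eq_mul_inv,
    ENNReal.mul_inv (by simp) (by simp), mul_assoc]

end Graph

section Path

/-- The relation on `{0, …, n - 1}` under which each odd number is below its two neighbours. -/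
def zigzagRel (n : ℕ) (i j : Fin n) : Prop :=
  Odd (i : ℕ) ∧ ((i : ℕ) + 1 = j ∨ (j : ℕ) + 1 = i)

lemma eulerNumber_eq_card_naturalLabeling (n : ℕ) :
    eulerNumber n = Nat.card (NaturalLabeling (zigzagRel n) n) := by
  refine Nat.card_congr (Equiv.subtypeEquivRight fun σ => ⟨?_, ?_⟩)
  · rintro h i j ⟨hi, hij | hij⟩
    · have := (h i (by omega)).2 hi
      grind
    · have := (h j (by omega)).1 (by grind)
      grind
  · intro h i hi
    have hne : σ ⟨i, Nat.lt_of_succ_lt hi⟩ ≠ σ ⟨i + 1, hi⟩ := by simp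
    exact ⟨fun heven => (h _ _ ⟨heven.add_one, .inr rfl⟩).lt_of_ne hne.symm,
      fun hodd => (h _ _ ⟨hodd, .inl rfl⟩).lt_of_ne hne⟩

lemma pathG_adj_castSucc_succ {m : ℕ} (i : Fin m) : (pathG m).Adj i.castSucc i.succ := by
  simp [pathG, Fin.ext_iff]

lemma bijective_pathEdge (m : ℕ) : Function.Bijective fun i : Fin m =>
    (⟨s(i.castSucc, i.succ), pathG_adj_castSucc_succ i⟩ : (pathG m).edgeSet) := by
  constructor
  · intro i j hij
    have hedge : s(i.castSucc, i.succ) = s(j.castSucc, j.succ) := congrArg Subtype.val hij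
    simp only [Sym2.eq_iff, Fin.ext_iff, Fin.val_castSucc, Fin.val_succ] at hedge
    omega
  · rintro ⟨e, he⟩
    induction e with | _ a b =>
    obtain ⟨-, hab | hab⟩ : a ≠ b ∧ ((a : ℕ) + 1 = b ∨ (b : ℕ) + 1 = a) := he
    · exact ⟨⟨a, by omega⟩, Subtype.ext (Sym2.eq_iff.2 (.inl ⟨rfl, Fin.ext hab⟩))⟩
    · exact ⟨⟨b, by omega⟩, Subtype.ext (Sym2.eq_iff.2 (.inr ⟨rfl, Fin.ext hab⟩))⟩

/-- The `i`-th edge of the path `P_m`, joining the vertices `i` and `i + 1`. -/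
def pathEdge (m : ℕ) : Fin m ≃ (pathG m).edgeSet :=
  Equiv.ofBijective _ (bijective_pathEdge m)

lemma mem_pathEdge {m : ℕ} {i : Fin m} {v : Fin (m + 1)} :
    v ∈ (pathEdge m i).1 ↔ v = i.castSucc ∨ v = i.succ :=
  Sym2.mem_iff

lemma bijective_interleave (m : ℕ) : Function.Bijective
    (Sum.elim (fun i => ⟨2 * i, by omega⟩) (fun i => ⟨2 * i + 1, by omega⟩) :
      Fin (m + 1) ⊕ Fin m → Fin (2 * m + 1)) := by
  rw [Fintype.bijective_iff_injective_and_card]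
  refine ⟨?_, by simp only [Fintype.card_sum, Fintype.card_fin]; omega⟩
  rintro (i | i) (j | j) hij <;> have hval := congrArg Fin.val hij <;> grind

/-- The enumeration of the vertices and edges of the path `P_m` in the order in which they follow
each other along it: the vertex `i` gets the number `2 * i`, the edge `{i, i + 1}` the number
`2 * i + 1`. -/
def interleave (m : ℕ) : Fin (m + 1) ⊕ Fin m ≃ Fin (2 * m + 1) :=
  Equiv.ofBijective _ (bijective_interleave m)

lemma val_interleave_inl {m : ℕ} (i : Fin (m + 1)) : (interleave m (.inl i) : ℕ) = 2 * i := rfl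

lemma val_interleave_inr {m : ℕ} (i : Fin m) : (interleave m (.inr i) : ℕ) = 2 * i + 1 := rfl

lemma zigzagRel_interleave_iff {m : ℕ} (a b : Fin (m + 1) ⊕ Fin m) :
    zigzagRel _ (interleave m a) (interleave m b) ↔
      incidenceRel (pathG m) (a.map id (pathEdge m)) (b.map id (pathEdge m)) := by
  rcases a with v | i <;> rcases b with w | j
  case inr.inl =>
    simp only [zigzagRel, incidenceRel, val_interleave_inl, val_interleave_inr, Sum.map_inl,
      Sum.map_inr, id_eq, mem_pathEdge, Fin.ext_iff, Fin.val_castSucc, Fin.val_succ]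
    grind
  all_goals
    simp only [zigzagRel, incidenceRel, val_interleave_inl, val_interleave_inr, Sum.map_inl,
      Sum.map_inr]
    grind

/-- The isomorphism of relations exhibiting the incidence order of the path `P_m` as a zigzag. -/
def zigzagIsoIncidence (m : ℕ) : zigzagRel (2 * m + 1) ≃r incidenceRel (pathG m) where
  toEquiv := (interleave m).symm.trans ((Equiv.refl _).sumCongr (pathEdge m))
  map_rel_iff' {i j} := by
    simpa using (zigzagRel_interleave_iff ((interleave m).symm i) ((interleave m).symm j)).symm

end Path

/-- `vol Q(P_m) = A_{2m+1} / (2^m * (2m+1)!)`. -/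
theorem volume_QSet_path (m : ℕ) :
    volume (QSet (pathG m)) = (eulerNumber (2 * m + 1) : ENNReal) /
      ((2 : ENNReal) ^ m * (Nat.factorial (2 * m + 1) : ENNReal)) := by
  have hE : Fintype.card (pathG m).edgeSet = m := by
    rw [Fintype.card_congr (pathEdge m).symm, Fintype.card_fin]
  have hn : Fintype.card (Fin (m + 1)) + Fintype.card (pathG m).edgeSet = 2 * m + 1 := by
    rw [hE, Fintype.card_fin]; omega
  rw [volume_QSet _ hn, hE, eulerNumber_eq_card_naturalLabeling,
    card_naturalLabeling_congr (zigzagIsoIncidence m)]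
end
end

section
/- For every m >= 3, the number of linear extensions of the incidence poset of the cycle C_m with m edges equals m * A_{2m-1}, where A_{2m-1} is the Euler number counting alternating permutations of {1, ..., 2m-1}. -/
/-!
If `G` has no isolated vertices, the least element of a linear extension of its incidence poset is
some edge `e`, and the elements above it form a linear extension of the incidence poset of `G - e`.
Hence the number of linear extensions of `G` is the sum over its edges of those of `G - e`. Deleting
any of the `m` edges of a cycle leaves the path on `m` vertices; read along the path, its incidence
poset is a fence on `2m - 1` elements with the vertices as peaks, and the linear extensions of a
fence are the alternating permutations.
-/

open MeasureTheory Filter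

noncomputable section

/-- The cycle `C_m` with `m` vertices and (for `m ≥ 3`) `m` edges. -/
def cycleG (m : ℕ) : SimpleGraph (Fin m) :=
  SimpleGraph.fromRel (fun i j => ((i : ℕ) + 1) % m = (j : ℕ))

instance (m : ℕ) : DecidableRel (cycleG m).Adj := fun i j =>
  decidable_of_iff _ (SimpleGraph.fromRel_adj _ i j).symm

open SimpleGraph

/-- The linear extensions of `r`, as labellings by the chain with `n` elements. The relation need
not be transitive, so a poset may be given by its covering pairs. The type is empty unless `α` has
exactly `n` elements; keeping `n` a parameter avoids casts between chains of equal length. -/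
abbrev LinExt {α : Type*} (r : α → α → Prop) (n : ℕ) : Type _ :=
  {f : α ≃ Fin n // ∀ a b, r a b → f a < f b}

namespace LinExt

variable {α β : Type*} {r : α → α → Prop} {s : β → β → Prop} {n : ℕ}

/-- Transport of linear extensions along an isomorphism of relations. -/
def congr (φ : r ≃r s) : LinExt r n ≃ LinExt s n where
  toFun f := ⟨φ.symm.toEquiv.trans f.1, fun _ _ h => f.2 _ _ (φ.symm.map_rel_iff.2 h)⟩
  invFun f := ⟨φ.toEquiv.trans f.1, fun _ _ h => f.2 _ _ (φ.map_rel_iff.2 h)⟩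
  left_inv f := Subtype.ext <| Equiv.ext fun a => congrArg f.1 (φ.symm_apply_apply a)
  right_inv f := Subtype.ext <| Equiv.ext fun b => congrArg f.1 (φ.apply_symm_apply b)

open scoped Classical in
/-- The linear extension with the minimal element `x` at the bottom and `g` above it. -/
def cons (x : {x // ∀ y, ¬ r y x}) (g : LinExt (Subrel r (· ≠ x.1)) n) : LinExt r (n + 1) :=
  ⟨((Equiv.optionSubtypeNe x.1).symm.trans (Equiv.optionCongr g.1)).trans (finSuccEquiv n).symm, by
    intro a b hab
    have hb : b ≠ x.1 := by
      rintro rfl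
      exact x.2 a hab
    by_cases ha : a = x.1
    · simp [ha, hb]
    · simpa [ha, hb] using g.2 ⟨a, ha⟩ ⟨b, hb⟩ hab⟩

lemma cons_self (x : {x // ∀ y, ¬ r y x}) (g : LinExt (Subrel r (· ≠ x.1)) n) :
    (cons x g).1 x.1 = 0 := by
  simp [cons]

lemma cons_coe (x : {x // ∀ y, ¬ r y x}) (g : LinExt (Subrel r (· ≠ x.1)) n)
    (a : {a // a ≠ x.1}) : (cons x g).1 a = (g.1 a).succ := by
  simp [cons, a.2]

lemma cons_injective : Function.Injective
    fun p : Σ x : {x // ∀ y, ¬ r y x}, LinExt (Subrel r (· ≠ x.1)) n => cons p.1 p.2 := by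
  rintro ⟨x, g⟩ ⟨y, h⟩ hxy
  have hval : (cons x g).1 = (cons y h).1 := congrArg Subtype.val hxy
  obtain rfl : x = y := Subtype.ext <| (cons y h).1.injective <|
    calc (cons y h).1 x.1
      _ = (cons x g).1 x.1 := by rw [hval]
      _ = 0 := cons_self x g
      _ = (cons y h).1 y.1 := (cons_self y h).symm
  obtain rfl : g = h := Subtype.ext <| Equiv.ext fun a => Fin.succ_injective n <| by
    rw [← cons_coe, ← cons_coe, hval]
  rfl

lemma cons_surjective : Function.Surjective
    fun p : Σ x : {x // ∀ y, ¬ r y x}, LinExt (Subrel r (· ≠ x.1)) n => cons p.1 p.2 := by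
  rintro ⟨f, hf⟩
  let x : {x // ∀ y, ¬ r y x} := ⟨f.symm 0, fun y hy => by simpa using hf _ _ hy⟩
  have ne_iff (a : α) : a ≠ x.1 ↔ f a ≠ 0 := by rw [Ne, Equiv.eq_symm_apply]
  let g : {a // a ≠ x.1} ≃ Fin n := (f.subtypeEquiv ne_iff).trans (finSuccAboveEquiv 0).symm
  have succ_g (a : {a // a ≠ x.1}) : (g a).succ = f a :=
    congrArg Subtype.val ((finSuccAboveEquiv 0).apply_symm_apply (f.subtypeEquiv ne_iff a))
  refine ⟨⟨x, g, fun a b hab => ?_⟩, Subtype.ext <| Equiv.ext fun a => ?_⟩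
  · rw [← Fin.succ_lt_succ_iff, succ_g, succ_g]
    exact hf _ _ hab
  · by_cases ha : a = x.1
    · rw [ha]
      exact (cons_self x _).trans (f.apply_symm_apply 0).symm
    · exact (cons_coe x _ ⟨a, ha⟩).trans (succ_g ⟨a, ha⟩)

/-- The classification of linear extensions by their least element. -/
def sigmaMinimalEquiv :
    (Σ x : {x // ∀ y, ¬ r y x}, LinExt (Subrel r (· ≠ x.1)) n) ≃ LinExt r (n + 1) :=
  Equiv.ofBijective _ ⟨cons_injective, cons_surjective⟩

end LinExt

/-- The strict order `y_e < x_v`, for `v ∈ e`, of the incidence poset of `G`. -/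
def IncRel {V : Type*} (G : SimpleGraph V) : V ⊕ G.edgeSet → V ⊕ G.edgeSet → Prop
  | .inr e, .inl v => v ∈ (e : Sym2 V)
  | _, _ => False

section IncRel

variable {V W : Type*} {G : SimpleGraph V} {H : SimpleGraph W}

@[simp]
lemma incRel_inr_inl {e : G.edgeSet} {v : V} :
    IncRel G (.inr e) (.inl v) ↔ v ∈ (e : Sym2 V) := Iff.rfl

@[simp]
lemma not_incRel_inl {v : V} {b : V ⊕ G.edgeSet} : ¬ IncRel G (.inl v) b := id

@[simp]
lemma not_incRel_inr {a : V ⊕ G.edgeSet} {e : G.edgeSet} : ¬ IncRel G a (.inr e) := by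
  cases a <;> exact id

lemma incLinExt_eq_card_linExt [Fintype V] [Fintype G.edgeSet] {n : ℕ}
    (hn : Fintype.card V + Fintype.card G.edgeSet = n) :
    incLinExt G = Nat.card (LinExt (IncRel G) n) := by
  subst hn
  exact Nat.card_congr <| Equiv.subtypeEquivRight fun f => by simp [Sum.forall]

/-- Isomorphic graphs have isomorphic incidence posets. -/
def incRelCongr (φ : G ≃g H) : IncRel G ≃r IncRel H where
  toEquiv := φ.toEquiv.sumCongr φ.mapEdgeSet
  map_rel_iff' := by
    rintro (v | e) (w | f) <;> simp [Iso.mapEdgeSet, Hom.mapEdgeSet]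

lemma incLinExt_congr [Fintype V] [Fintype G.edgeSet] [Fintype W] [Fintype H.edgeSet]
    (φ : G ≃g H) : incLinExt G = incLinExt H := by
  rw [incLinExt_eq_card_linExt rfl, incLinExt_eq_card_linExt rfl, Fintype.card_congr φ.toEquiv,
    Fintype.card_congr φ.mapEdgeSet]
  exact Nat.card_congr (LinExt.congr (incRelCongr φ))

lemma mem_edgeSet_deleteEdges {s : Set (Sym2 V)} {e : Sym2 V} :
    e ∈ (G.deleteEdges s).edgeSet ↔ e ∈ G.edgeSet ∧ e ∉ s := by
  rw [edgeSet_deleteEdges, Set.mem_sdiff]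

/-- Removing the element `y_e` from the incidence poset amounts to deleting the edge `e`. -/
def incRelDeleteEdge (e : G.edgeSet) :
    IncRel (G.deleteEdges {e.1}) ≃r Subrel (IncRel G) (· ≠ .inr e) where
  toFun
    | .inl v => ⟨.inl v, Sum.inl_ne_inr⟩
    | .inr f => ⟨.inr ⟨f, (mem_edgeSet_deleteEdges.1 f.2).1⟩, fun h =>
        (mem_edgeSet_deleteEdges.1 f.2).2 (congrArg Subtype.val (Sum.inr_injective h))⟩
  invFun
    | ⟨.inl v, _⟩ => .inl v
    | ⟨.inr f, hf⟩ => .inr ⟨f, mem_edgeSet_deleteEdges.2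
        ⟨f.2, fun h => hf (congrArg Sum.inr (Subtype.ext h))⟩⟩
  left_inv := by rintro (v | f) <;> rfl
  right_inv := by rintro ⟨v | f, _⟩ <;> rfl
  map_rel_iff' := by rintro (v | f) (w | g) <;> simp

/-- Without isolated vertices, the minimal elements of the incidence poset are the edges. -/
def edgeSetEquivMinimal (hG : ∀ v, ¬ G.IsIsolated v) :
    G.edgeSet ≃ {x : V ⊕ G.edgeSet // ∀ y, ¬ IncRel G y x} :=
  Equiv.ofBijective (fun e => ⟨.inr e, fun _ => not_incRel_inr⟩) <| by
    refine ⟨fun e f h => Sum.inr_injective (congrArg Subtype.val h), ?_⟩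
    rintro ⟨v | e, h⟩
    · obtain ⟨w, hvw⟩ := exists_adj_iff_not_isIsolated.2 (hG v)
      exact absurd (Sym2.mem_mk_left v w) (h (.inr ⟨s(v, w), hvw⟩))
    · exact ⟨e, rfl⟩

lemma card_edgeSet_deleteEdges_add_one [Fintype G.edgeSet] (e : G.edgeSet)
    [Fintype (G.deleteEdges {e.1}).edgeSet] :
    Fintype.card (G.deleteEdges {e.1}).edgeSet + 1 = Fintype.card G.edgeSet := by
  classical
  have : (G.deleteEdges {e.1}).edgeFinset = G.edgeFinset.erase e.1 := by
    ext f
    simp [and_comm]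
  rw [← edgeFinset_card, ← edgeFinset_card, this,
    Finset.card_erase_add_one (mem_edgeFinset.2 e.2)]

theorem incLinExt_eq_sum_deleteEdges [Fintype V] [Nonempty V] [Fintype G.edgeSet]
    [∀ e : G.edgeSet, Fintype (G.deleteEdges {e.1}).edgeSet] (hG : ∀ v, ¬ G.IsIsolated v) :
    incLinExt G = ∑ e : G.edgeSet, incLinExt (G.deleteEdges {e.1}) := by
  obtain ⟨n, hn⟩ : ∃ n, Fintype.card V + Fintype.card G.edgeSet = n + 1 :=
    Nat.exists_eq_add_one.2 (Nat.add_pos_left Fintype.card_pos _)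
  have hn' (e : G.edgeSet) : Fintype.card V + Fintype.card (G.deleteEdges {e.1}).edgeSet = n := by
    have := card_edgeSet_deleteEdges_add_one e
    lia
  calc incLinExt G
    _ = Nat.card (LinExt (IncRel G) (n + 1)) := incLinExt_eq_card_linExt hn
    _ = Nat.card (Σ x : {x // ∀ y, ¬ IncRel G y x}, LinExt (Subrel (IncRel G) (· ≠ x.1)) n) :=
      (Nat.card_congr LinExt.sigmaMinimalEquiv).symm
    _ = Nat.card (Σ e : G.edgeSet, LinExt (IncRel (G.deleteEdges {e.1})) n) :=
      (Nat.card_congr <| Equiv.sigmaCongr (edgeSetEquivMinimal hG) fun e =>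
        LinExt.congr (incRelDeleteEdge e)).symm
    _ = ∑ e : G.edgeSet, Nat.card (LinExt (IncRel (G.deleteEdges {e.1})) n) := Nat.card_sigma
    _ = ∑ e : G.edgeSet, incLinExt (G.deleteEdges {e.1}) :=
      Finset.sum_congr rfl fun e _ => (incLinExt_eq_card_linExt (hn' e)).symm

end IncRel

/-- The fence on `k` elements: each odd position, counting from `0`, lies below its neighbours. -/
def Fence (k : ℕ) (i j : Fin k) : Prop := Odd (i : ℕ) ∧ (pathGraph k).Adj i j

lemma eulerNumber_eq_card_linExt (k : ℕ) : eulerNumber k = Nat.card (LinExt (Fence k) k) := by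
  refine Nat.card_congr <| Equiv.subtypeEquivRight fun σ =>
    ⟨?_, fun h i hi => ⟨fun even_i => ?_, fun odd_i => ?_⟩⟩
  · rintro h ⟨i, hi⟩ ⟨j, hj⟩ ⟨odd_i, hij⟩
    rcases pathGraph_adj.1 hij with rfl | rfl
    · exact (h i hj).2 odd_i
    · exact (h j hi).1 (Nat.not_odd_iff_even.1 (Nat.odd_add_one.1 odd_i))
  · exact h _ _ ⟨even_i.add_one, pathGraph_adj.2 (.inr rfl)⟩
  · exact h _ _ ⟨odd_i, pathGraph_adj.2 (.inl rfl)⟩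

/-- The edges of the path, in order. -/
def pathEdgeEquiv (n : ℕ) : Fin n ≃ (pathGraph (n + 1)).edgeSet :=
  Equiv.ofBijective (fun i => ⟨s(i.castSucc, i.succ), pathGraph_adj.2 (.inl rfl)⟩) <| by
    constructor
    · intro i j h
      have h := Sym2.eq_iff.1 (congrArg Subtype.val h)
      simp only [Fin.ext_iff, Fin.val_castSucc, Fin.val_succ] at h
      lia
    · rintro ⟨⟨a, b⟩, h⟩
      rcases pathGraph_adj.1 h with hab | hba
      · exact ⟨⟨a, by lia⟩, Subtype.ext (congrArg (s(a, ·)) (Fin.ext hab))⟩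
      · exact ⟨⟨b, by lia⟩, Subtype.ext ((congrArg (s(b, ·)) (Fin.ext hba)).trans Sym2.eq_swap)⟩

lemma coe_pathEdgeEquiv {n : ℕ} (i : Fin n) :
    (pathEdgeEquiv n i : Sym2 (Fin (n + 1))) = s(i.castSucc, i.succ) := rfl

/-- The interleaving of two chains, the left one taking the even positions; it lists the vertices
and edges of a path in the order in which one meets them. -/
def interleaveEquiv (n : ℕ) : Fin (n + 1) ⊕ Fin n ≃ Fin (2 * n + 1) :=
  Equiv.ofBijective (Sum.elim (fun v => ⟨2 * v, by lia⟩) (fun i => ⟨2 * i + 1, by lia⟩)) <| by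
    constructor
    · rintro (a | a) (b | b) h <;> have h := congrArg Fin.val h <;>
        simp only [Sum.elim_inl, Sum.elim_inr, Sum.inl.injEq, Sum.inr.injEq, Fin.ext_iff,
          reduceCtorEq] at h ⊢ <;> lia
    · rintro ⟨k, hk⟩
      obtain ⟨i, rfl | rfl⟩ := Nat.even_or_odd' k
      · exact ⟨.inl ⟨i, by lia⟩, rfl⟩
      · exact ⟨.inr ⟨i, by lia⟩, rfl⟩

lemma val_interleaveEquiv_inl {n : ℕ} (v : Fin (n + 1)) :
    (interleaveEquiv n (.inl v) : ℕ) = 2 * v := rfl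

lemma val_interleaveEquiv_inr {n : ℕ} (i : Fin n) :
    (interleaveEquiv n (.inr i) : ℕ) = 2 * i + 1 := rfl

/-- The incidence poset of a path is a fence. -/
def incRelPathGraph (n : ℕ) : IncRel (pathGraph (n + 1)) ≃r Fence (2 * n + 1) where
  toEquiv := ((Equiv.refl _).sumCongr (pathEdgeEquiv n).symm).trans (interleaveEquiv n)
  map_rel_iff' {a b} := by
    obtain ⟨a, rfl⟩ := ((Equiv.refl _).sumCongr (pathEdgeEquiv n)).surjective a
    obtain ⟨b, rfl⟩ := ((Equiv.refl _).sumCongr (pathEdgeEquiv n)).surjective b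
    rcases a with v | i <;> rcases b with w | j <;>
      simp only [Fence, pathGraph_adj, Equiv.trans_apply, Equiv.sumCongr_apply, Equiv.coe_refl,
        Sum.map_inl, Sum.map_inr, id_eq, Equiv.symm_apply_apply, val_interleaveEquiv_inl,
        val_interleaveEquiv_inr, incRel_inr_inl, not_incRel_inl, not_incRel_inr, coe_pathEdgeEquiv,
        Sym2.mem_iff, Fin.ext_iff, Fin.val_castSucc, Fin.val_succ, Nat.odd_iff] <;>
      lia

lemma incLinExt_pathGraph (n : ℕ) [Fintype (pathGraph (n + 1)).edgeSet] :
    incLinExt (pathGraph (n + 1)) = eulerNumber (2 * n + 1) := by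
  have hn : Fintype.card (Fin (n + 1)) + Fintype.card (pathGraph (n + 1)).edgeSet = 2 * n + 1 := by
    simpa using Fintype.card_congr (incRelPathGraph n).toEquiv
  rw [incLinExt_eq_card_linExt hn, eulerNumber_eq_card_linExt]
  exact Nat.card_congr (LinExt.congr (incRelPathGraph n))

lemma val_add_one_eq_val_iff {n : ℕ} {a b : Fin (n + 2)} :
    (a : ℕ) + 1 = b ↔ b - a = 1 ∧ b ≠ 0 := by
  rw [sub_eq_iff_eq_add', Fin.ext_iff, Fin.ne_iff_vne, Fin.val_add_one]
  grind

/-- Deleting an edge from a cycle leaves a path, which is traversed starting from an end of that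
edge. -/
def pathGraphIsoDeleteEdges {n : ℕ} (v : Fin (n + 3)) :
    pathGraph (n + 3) ≃g (cycleGraph (n + 3)).deleteEdges {s(v - 1, v)} where
  toEquiv := Equiv.addRight v
  map_rel_iff' {a b} := by
    have deleted : s(a + v, b + v) = s(v - 1, v) ↔ a = -1 ∧ b = 0 ∨ a = 0 ∧ b = -1 := by
      simp only [Sym2.eq_iff, sub_eq_neg_add, add_left_inj, add_eq_right]
    have neg_one_ne_one : (-1 : Fin (n + 3)) ≠ 1 := by
      simp [Fin.ext_iff, Fin.coe_neg_one]
    simp only [Equiv.coe_addRight, deleteEdges_adj, cycleGraph_adj, add_sub_add_right_eq_sub,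
      Set.mem_singleton_iff, deleted, pathGraph_adj, val_add_one_eq_val_iff, sub_eq_iff_eq_add]
    grind

lemma exists_eq_of_mem_edgeSet_cycleGraph {n : ℕ} {e : Sym2 (Fin (n + 2))}
    (he : e ∈ (cycleGraph (n + 2)).edgeSet) : ∃ v, e = s(v - 1, v) := by
  obtain ⟨a, b⟩ := e
  rcases cycleGraph_adj.1 he with hab | hba
  · exact ⟨a, by rw [← hab, sub_sub_self]; exact Sym2.eq_swap⟩
  · exact ⟨b, by rw [← hba, sub_sub_self]⟩

lemma incLinExt_deleteEdges_cycleGraph {n : ℕ} {e : Sym2 (Fin (n + 3))}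
    (he : e ∈ (cycleGraph (n + 3)).edgeSet)
    [Fintype ((cycleGraph (n + 3)).deleteEdges {e}).edgeSet] :
    incLinExt ((cycleGraph (n + 3)).deleteEdges {e}) = eulerNumber (2 * (n + 2) + 1) := by
  classical
  obtain ⟨v, rfl⟩ := exists_eq_of_mem_edgeSet_cycleGraph he
  rw [← incLinExt_congr (pathGraphIsoDeleteEdges v), incLinExt_pathGraph]

lemma card_edgeSet_cycleGraph (n : ℕ) [Fintype (cycleGraph (n + 3)).edgeSet] :
    Fintype.card (cycleGraph (n + 3)).edgeSet = n + 3 := by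
  have handshake := sum_degrees_eq_twice_card_edges (cycleGraph (n + 3))
  simp_rw [cycleGraph_degree_three_le, Finset.sum_const, Finset.card_univ, Fintype.card_fin,
    smul_eq_mul, mul_comm _ 2] at handshake
  rw [← edgeFinset_card]
  convert (Nat.mul_left_cancel two_pos handshake).symm

lemma cycleG_eq_cycleGraph : ∀ m : ℕ, cycleG m = cycleGraph m
  | 0 | 1 => Subsingleton.elim _ _
  | n + 2 => by
    have val_mod_eq_iff (i j : Fin (n + 2)) : ((i : ℕ) + 1) % (n + 2) = j ↔ j - i = 1 := by
      rw [sub_eq_iff_eq_add', Fin.ext_iff, Fin.val_add, Fin.val_one, eq_comm]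
    ext a b
    rw [cycleG, fromRel_adj, cycleGraph_adj, val_mod_eq_iff, val_mod_eq_iff, or_comm]
    refine and_iff_right_of_imp ?_
    rintro h rfl
    simp at h

/-- Kreweras: the incidence poset of the cycle `C_m` has `m * A_{2m-1}` linear
extensions. -/
theorem incLinExt_cycle (m : ℕ) (hm : 3 ≤ m) :
    incLinExt (cycleG m) = m * eulerNumber (2 * m - 1) := by
  classical
  obtain ⟨n, rfl⟩ := Nat.exists_eq_add_of_le' hm
  calc incLinExt (cycleG (n + 3))
    _ = incLinExt (cycleGraph (n + 3)) := by congr! 1; exact cycleG_eq_cycleGraph _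
    _ = ∑ e : (cycleGraph (n + 3)).edgeSet, incLinExt ((cycleGraph (n + 3)).deleteEdges {e.1}) :=
      incLinExt_eq_sum_deleteEdges cycleGraph_preconnected.not_isIsolated
    _ = ∑ _e : (cycleGraph (n + 3)).edgeSet, eulerNumber (2 * (n + 3) - 1) :=
      Finset.sum_congr rfl fun e _ => incLinExt_deleteEdges_cycleGraph e.2
    _ = (n + 3) * eulerNumber (2 * (n + 3) - 1) := by
      rw [Finset.sum_const, Finset.card_univ, card_edgeSet_cycleGraph, smul_eq_mul]
end
end
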